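/- Suppose ε is not identically zero. Then there exists a (1,∞)-atom a on (T,μ) such that Σ_{x∈T} |𝓡_ε* a(x)| μ(x) = +∞, where 𝓡_ε* a(x) = Σ_{y∈T} K(x,y) ∇_ε* a(y) μ(y); in particular, the adjoint ε-horizontal Riesz transform 𝓡_ε* does not map the atomic Hardy space H¹(μ) into L¹(μ). -/

import Mathlib

open MeasureTheory ENNReal Set Function
open scoped NNReal ENNReal Classical

noncomputable section

/-- A homogeneous tree of degree `q+1` with a distinguished end (mythical ancestor),
encoded through its graph distance `dist`, horocyclic level function `level`,
and predecessor map `pred`. -/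
structure FlowTree (q : ℕ) where
  V : Type
  countableV : Countable V
  dist : V → V → ℕ
  level : V → ℤ
  pred : V → V
  dist_self : ∀ x, dist x x = 0
  eq_of_dist_eq_zero : ∀ x y, dist x y = 0 → x = y
  dist_comm : ∀ x y, dist x y = dist y x
  dist_triangle : ∀ x y z, dist x z ≤ dist x y + dist y z
  level_pred : ∀ x, level (pred x) = level x + 1
  succ_finite : ∀ x, Set.Finite {y | pred y = x}
  succ_card : ∀ x, Nat.card {y // pred y = x} = q
  dist_le : ∀ (x y : V) (n m : ℕ), pred^[n] x = pred^[m] y → dist x y ≤ n + m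
  dist_spec : ∀ x y, ∃ n m : ℕ, pred^[n] x = pred^[m] y ∧ n + m = dist x y

namespace FlowTree

variable {q : ℕ} (S : FlowTree q)

/-- The canonical flow measure weight `μ(x) = q^{ℓ(x)}`, as an extended nonnegative real. -/
def w (x : S.V) : ℝ≥0∞ := (q : ℝ≥0∞) ^ ((S.level x : ℤ) : ℝ)

/-- The canonical flow measure weight `μ(x) = q^{ℓ(x)}`, as a real number. -/
def wR (x : S.V) : ℝ := (q : ℝ) ^ (S.level x)

/-- The canonical flow measure of a set `E ⊆ T`. -/
def muS (E : Set S.V) : ℝ≥0∞ := ∑' x : E, S.w x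

/-- The `L^p(μ)` (quasi)norm, `p ∈ [1,∞]`. -/
def lpNorm (p : ℝ≥0∞) {E : Type*} [NNNorm E] (f : S.V → E) : ℝ≥0∞ :=
  if p = ∞ then ⨆ x, (‖f x‖₊ : ℝ≥0∞)
  else (∑' x, (‖f x‖₊ : ℝ≥0∞) ^ p.toReal * S.w x) ^ (1 / p.toReal)

/-- The weak `L^{1,∞}(μ)` quasinorm `sup_{λ>0} λ · μ({|f| > λ})`. -/
def wkNorm {E : Type*} [NNNorm E] (f : S.V → E) : ℝ≥0∞ :=
  ⨆ t : ℝ≥0, (t : ℝ≥0∞) * S.muS {x | t < ‖f x‖₊}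

/-- `Σf(x) = f(𝔭(x))`. -/
def sig (f : S.V → ℂ) : S.V → ℂ := fun x => f (S.pred x)

/-- `Σ*f(x) = (1/q) Σ_{y ∈ succ(x)} f(y)`. -/
def sigStar (f : S.V → ℂ) : S.V → ℂ :=
  fun x => (q : ℂ)⁻¹ * ∑' y : {y | S.pred y = x}, f y.1

/-- The flow gradient `∇ = id − Σ`. -/
def grad (f : S.V → ℂ) : S.V → ℂ := fun x => f x - f (S.pred x)

/-- `∇* = id − Σ*`. -/
def gradStar (f : S.V → ℂ) : S.V → ℂ := fun x => f x - S.sigStar f x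

/-- The modulus of the gradient `Df(x) = Σ_{y ∼ x} |f(x) − f(y)|`. -/
def Dmod (f : S.V → ℂ) : S.V → ℝ :=
  fun x => ∑' y : {y | S.dist x y = 1}, ‖f x - f y.1‖

/-- `Σ̃_n = Σ^n` for `n ≥ 0` and `(Σ*)^{−n}` for `n < 0`. -/
def sigTilde (n : ℤ) (f : S.V → ℂ) : S.V → ℂ :=
  if 0 ≤ n then (S.sig)^[n.toNat] f else (S.sigStar)^[(-n).toNat] f

/-- `Σ*` acting on real-valued functions. -/
def sigStarR (f : S.V → ℝ) : S.V → ℝ :=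
  fun x => (q : ℝ)⁻¹ * ∑' y : {y | S.pred y = x}, f y.1

/-- The flow Laplacian `𝓛 = id − (Σ + Σ*)/2`, acting pointwise on real functions. -/
def lapR (f : S.V → ℝ) : S.V → ℝ :=
  fun x => f x - (f (S.pred x) + S.sigStarR f x) / 2

/-- `δ_y/μ(y)`, the normalized delta at `y`. -/
def deltaMu (y : S.V) : S.V → ℝ := fun z => if z = y then (S.wR y)⁻¹ else 0

/-- The heat kernel `H_t(x,y)` of the flow Laplacian, i.e. `(e^{−t𝓛} (δ_y/μ(y)))(x)`
computed via the exponential power series of the bounded operator `𝓛`. -/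
def Hker (t : ℝ) (x y : S.V) : ℝ :=
  ∑' n : ℕ, ((-t) ^ n / (n.factorial : ℝ)) * ((S.lapR)^[n] (S.deltaMu y)) x

/-- The integral kernel `K(x,y)` of `𝓛^{−1/2}`, by subordination. -/
def Kker (x y : S.V) : ℝ :=
  (Real.sqrt Real.pi)⁻¹ * ∫ t in Set.Ioi (0 : ℝ), S.Hker t x y * t ^ (-(1 : ℝ)/2)

/-- The Riesz transform `𝓡 = ∇𝓛^{−1/2}`, defined on finitely supported functions. -/
def riesz (f : S.V → ℂ) : S.V → ℂ :=
  fun x => ∑' y, ((S.Kker x y - S.Kker (S.pred x) y : ℝ) : ℂ) * f y * (S.wR y : ℂ)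

/-- The integral operator with almost-radial kernel `q^{−ℓ(x)/2} G(d(x,y)) q^{−ℓ(y)/2}`. -/
def kernelOp (G : ℕ → ℂ) (f : S.V → ℂ) : S.V → ℂ :=
  fun x => ∑' y, (((q : ℝ) ^ (-((S.level x : ℤ) : ℝ)/2) * (q : ℝ) ^ (-((S.level y : ℤ) : ℝ)/2) : ℝ) : ℂ)
    * G (S.dist x y) * f y * (S.wR y : ℂ)

/-- The ε-horizontal gradient `∇_ε f(x) = (1/q) Σ_{y ∈ succ(x)} ε(y) f(y)`. -/
def hgrad (ε f : S.V → ℂ) : S.V → ℂ :=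
  fun x => (q : ℂ)⁻¹ * ∑' y : {y | S.pred y = x}, ε y.1 * f y.1

/-- The adjoint ε-horizontal gradient `∇_ε* f(x) = conj(ε(x)) f(𝔭(x))`. -/
def hgradStar (ε f : S.V → ℂ) : S.V → ℂ :=
  fun x => (starRingEnd ℂ) (ε x) * f (S.pred x)

/-- `‖ε‖_∞`. -/
def epsSup (ε : S.V → ℂ) : ℝ≥0∞ := ⨆ x, (‖ε x‖₊ : ℝ≥0∞)

/-- The `L²(μ)` inner product. -/
def inner2 (f g : S.V → ℂ) : ℂ := ∑' x, f x * (starRingEnd ℂ) (g x) * (S.wR x : ℂ)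

/-- `y ≤ x` iff `d(x,y) = ℓ(x) − ℓ(y)`. -/
def le' (y x : S.V) : Prop := (S.dist x y : ℤ) = S.level x - S.level y

/-- Admissible trapezoids of `(T,μ)`. -/
def IsAdmissibleTrapezoid (F : Set S.V) : Prop :=
  (∃ x, F = {x}) ∨
  ∃ (x₀ : S.V) (h1 h2 : ℕ), 0 < h1 ∧ 2 * h1 ≤ h2 ∧ h2 ≤ 12 * h1 ∧
    F = {x | S.le' x x₀ ∧ S.level x₀ - (h2 : ℤ) < S.level x ∧ S.level x ≤ S.level x₀ - (h1 : ℤ)}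

/-- `(1,∞)`-atoms of `(T,μ)`. -/
def IsOneInftyAtom (a : S.V → ℂ) : Prop :=
  ∃ F : Set S.V, S.IsAdmissibleTrapezoid F ∧ Function.support a ⊆ F ∧
    (∑' x, a x * (S.wR x : ℂ)) = 0 ∧ ∀ x, (‖a x‖₊ : ℝ≥0∞) ≤ (S.muS F)⁻¹

end FlowTree

namespace ZRiesz

/-- The discrete Laplacian on `ℤ`. -/
def deltaZ (F : ℤ → ℝ) : ℤ → ℝ := fun n => F n - (F (n + 1) + F (n - 1)) / 2

/-- The heat kernel `h_t^ℤ = e^{−tΔ_ℤ} δ_0` on `ℤ`, via the exponential power series. -/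
def heatZ (t : ℝ) (n : ℤ) : ℝ :=
  ∑' k : ℕ, ((-t) ^ k / (k.factorial : ℝ)) *
    (deltaZ^[k] (fun m => if m = 0 then (1 : ℝ) else 0)) n

/-- Kernel of the Riesz transform on `ℤ`: `k_ℤ(n) = π^{−1/2} ∫₀^∞ (∇_ℤ h_t^ℤ)(n) t^{−1/2} dt`. -/
def kZ (n : ℤ) : ℝ :=
  (Real.sqrt Real.pi)⁻¹ * ∫ t in Set.Ioi (0 : ℝ), (heatZ t n - heatZ t (n + 1)) * t ^ (-(1 : ℝ)/2)

/-- Kernel of the skew-symmetric part: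
`k̃_ℤ(n) = π^{−1/2} ∫₀^∞ (∇̃_ℤ h_t^ℤ)(n) t^{−1/2} dt`. -/
def ktZ (n : ℤ) : ℝ :=
  (Real.sqrt Real.pi)⁻¹ *
    ∫ t in Set.Ioi (0 : ℝ), (heatZ t (n - 1) - heatZ t (n + 1)) * t ^ (-(1 : ℝ)/2)

/-- The closed formula `k̃_ℤ(m) = (2√2/π) m/(m² − 1/4)`. -/
def ktZc (m : ℤ) : ℝ := (2 * Real.sqrt 2 / Real.pi) * (m : ℝ) / ((m : ℝ) ^ 2 - 1/4)

/-- `G(n) = Σ_{k≥0} q^{−(n+2k)/2} k̃_ℤ(n+2k+1)` (subordination kernel version). -/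
def Gint (q : ℕ) (n : ℕ) : ℝ :=
  ∑' k : ℕ, (q : ℝ) ^ (-(((n : ℝ)) + 2 * (k : ℝ))/2) * ktZ ((n : ℤ) + 2 * (k : ℤ) + 1)

/-- `G(n) = Σ_{k≥0} q^{−(n+2k)/2} k̃_ℤ(n+2k+1)` (closed formula version). -/
def Gc (q : ℕ) (n : ℕ) : ℝ :=
  ∑' k : ℕ, (q : ℝ) ^ (-(((n : ℝ)) + 2 * (k : ℝ))/2) * ktZc ((n : ℤ) + 2 * (k : ℤ) + 1)

/-- The `ℓ^p(ℤ)` norm. -/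
def zlpNorm (p : ℝ≥0∞) (F : ℤ → ℂ) : ℝ≥0∞ :=
  if p = ∞ then ⨆ n, (‖F n‖₊ : ℝ≥0∞)
  else (∑' n : ℤ, (‖F n‖₊ : ℝ≥0∞) ^ p.toReal) ^ (1 / p.toReal)

/-- The `ℓ^{1,∞}(ℕ)` quasinorm. -/
def natWk (F : ℕ → ℂ) : ℝ≥0∞ :=
  ⨆ t : ℝ≥0, (t : ℝ≥0∞) * ∑' (_ : {n : ℕ | t < ‖F n‖₊}), (1 : ℝ≥0∞)

end ZRiesz

/-- The punctured boundary `Ω = ∂T \ {ω_*}` of the tree, together with the measure `ν`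
with `ν(Ω_x) = q^{ℓ(x)}`.  `vert ω n` is the vertex `ω_n` of level `n` on the geodesic
`[ω, ω_*]`. -/
structure FlowTreeBoundary {q : ℕ} (S : FlowTree q) where
  Ω : Type
  mΩ : MeasurableSpace Ω
  ν : @MeasureTheory.Measure Ω mΩ
  vert : Ω → ℤ → S.V
  level_vert : ∀ ω n, S.level (vert ω n) = n
  pred_vert : ∀ ω n, S.pred (vert ω n) = vert ω (n + 1)
  vert_surj : ∀ x : S.V, ∃ ω, vert ω (S.level x) = x
  vert_inj : ∀ ω ω', (∀ n, vert ω n = vert ω' n) → ω = ω'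
  meas_cone : ∀ x : S.V, @MeasurableSet Ω mΩ {ω | vert ω (S.level x) = x}
  nu_cone : ∀ x : S.V, ν {ω | vert ω (S.level x) = x} = (q : ℝ≥0∞) ^ ((S.level x : ℤ) : ℝ)

attribute [instance] FlowTreeBoundary.mΩ

namespace FlowTreeBoundary

variable {q : ℕ} {S : FlowTree q} (B : FlowTreeBoundary S)

/-- The product measure `ν × #` on `Ω × ℤ`. -/
def pm : MeasureTheory.Measure (B.Ω × ℤ) := B.ν.prod MeasureTheory.Measure.count

/-- `Ω_x = {ω : x ∈ [ω, ω_*]}`. -/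
def cone (x : S.V) : Set B.Ω := {ω | B.vert ω (S.level x) = x}

/-- The lifting operator `Φf(ω,n) = f(ω_n)`. -/
def lift (f : S.V → ℂ) : B.Ω × ℤ → ℂ := fun p => f (B.vert p.1 p.2)

/-- The lifting operator on `ℝ≥0∞`-valued functions. -/
def liftNN (f : S.V → ℝ≥0∞) : B.Ω × ℤ → ℝ≥0∞ := fun p => f (B.vert p.1 p.2)

/-- The adjoint `Φ*g(x) = ν(Ω_x)^{−1} ∫_{Ω_x} g(ω, ℓ(x)) dν(ω)`. -/
def liftStar (g : B.Ω × ℤ → ℂ) : S.V → ℂ :=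
  fun x => ((B.ν (B.cone x)).toReal)⁻¹ * ∫ ω in B.cone x, g (ω, S.level x) ∂B.ν

/-- The adjoint `Φ*` on `ℝ≥0∞`-valued functions. -/
def liftStarNN (g : B.Ω × ℤ → ℝ≥0∞) : S.V → ℝ≥0∞ :=
  fun x => (B.ν (B.cone x))⁻¹ * ∫⁻ ω in B.cone x, g (ω, S.level x) ∂B.ν

end FlowTreeBoundary

/-- The weak `L^{1,∞}(μ)` quasinorm with respect to a measure. -/
def wkMeas {α : Type*} [MeasurableSpace α] (μ : MeasureTheory.Measure α) (g : α → ℂ) : ℝ≥0∞ :=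
  ⨆ t : ℝ≥0, (t : ℝ≥0∞) * μ {a | t < ‖g a‖₊}

/-- The weak `L^{1,∞}(μ)` quasinorm for `ℝ≥0∞`-valued functions. -/
def wkMeasNN {α : Type*} [MeasurableSpace α] (μ : MeasureTheory.Measure α) (g : α → ℝ≥0∞) :
    ℝ≥0∞ :=
  ⨆ t : ℝ≥0, (t : ℝ≥0∞) * μ {a | (t : ℝ≥0∞) < g a}

end

/-
Write `𝓛 = 1 - P` with `P = (Σ + Σ*) / 2`, so that `𝓛^{-1/2} = ∑ₙ cₙ Pⁿ`, where the `cₙ` are the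
Taylor coefficients of `(1 - z)^{-1/2}`. On a function annihilated by `Σ*`, such as `∇_ε* a`, the
operator `P` acts along lines of ancestors as the simple random walk on `ℕ` killed at `-1`. Hence,
if such a `g` lives on a single level, `𝓛^{-1/2} g` equals `κ(N) g(z)` on the `N`-th generation of
descendants of `z`, where `κ` is the row at `0` of the operator `(1 - A)^{-1/2}` for the killed
walk `A`. All the generations below `z` have the same flow measure, so `𝓛^{-1/2} g` is not
integrable as soon as `∑ κ(N) = ∞`. This sum is `∑ₙ cₙ sₙ`, with `sₙ` the probability of surviving
`n` steps; both factors are at least of order `n^{-1/2}`, the second one by Hölder's inequality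
applied to the first and third moments of the killed walk.
-/

/-- The `n`-th Taylor coefficient of `(1 - z) ^ (-1/2)`. -/
noncomputable def invSqrtCoeff (n : ℕ) : ℝ := n.centralBinom / 4 ^ n

lemma invSqrtCoeff_nonneg (n : ℕ) : 0 ≤ invSqrtCoeff n := by
  unfold invSqrtCoeff; positivity

lemma invSqrtCoeff_zero : invSqrtCoeff 0 = 1 := by simp [invSqrtCoeff]

lemma invSqrtCoeff_succ (n : ℕ) :
    invSqrtCoeff (n + 1) = invSqrtCoeff n * ((n + 1 / 2) / (n + 1)) := by
  have h : ((n : ℝ) + 1) * (n + 1).centralBinom = 2 * (2 * n + 1) * n.centralBinom := by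
    exact_mod_cast n.succ_mul_centralBinom_succ
  unfold invSqrtCoeff
  rw [pow_succ, div_mul_div_comm, div_eq_div_iff (by positivity) (by positivity)]
  linear_combination (4 : ℝ) ^ n * h

lemma invSqrtCoeff_le_one (n : ℕ) : invSqrtCoeff n ≤ 1 :=
  div_le_one_of_le₀ (mod_cast n.centralBinom_le_four_pow) (by positivity)

lemma one_div_le_invSqrtCoeff_sq (n : ℕ) : 1 / (4 * n + 1 : ℝ) ≤ invSqrtCoeff n ^ 2 := by
  induction n with
  | zero => simp [invSqrtCoeff_zero]
  | succ n ih =>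
    have hratio : 1 / (4 * (n + 1 : ℕ) + 1 : ℝ)
        ≤ 1 / (4 * n + 1) * ((n + 1 / 2) / (n + 1)) ^ 2 := by
      rw [div_pow, div_mul_div_comm, div_le_div_iff₀ (by positivity) (by positivity)]
      push_cast
      nlinarith
    rw [invSqrtCoeff_succ, mul_pow]
    exact hratio.trans (mul_le_mul_of_nonneg_right ih (sq_nonneg _))

lemma Gamma_natCast_add_half (n : ℕ) :
    Real.Gamma (n + 1 / 2) = √Real.pi * n.factorial * invSqrtCoeff n := by
  induction n with
  | zero => simpa [invSqrtCoeff_zero] using Real.Gamma_one_half_eq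
  | succ n ih =>
    rw [Nat.cast_succ, add_right_comm, Real.Gamma_add_one (by positivity), ih, invSqrtCoeff_succ,
      Nat.factorial_succ]
    push_cast
    field_simp

/-- The `n`-step kernel, started at `0`, of the simple random walk on `ℕ` killed at `-1`. -/
noncomputable def killedWalk : ℕ → ℕ → ℝ
  | 0, 0 => 1
  | 0, _ + 1 => 0
  | n + 1, 0 => killedWalk n 1 / 2
  | n + 1, j + 1 => (killedWalk n j + killedWalk n (j + 2)) / 2

namespace killedWalk

lemma nonneg (n j : ℕ) : 0 ≤ killedWalk n j := by
  fun_induction killedWalk n j <;> positivity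

lemma eq_zero_of_lt {n j : ℕ} (h : n < j) : killedWalk n j = 0 := by
  fun_induction killedWalk n j <;> grind

lemma sum_succ {E : Type*} [AddCommGroup E] [Module ℝ E] {V : ℕ → E} (hV : V 0 = 0) (n : ℕ) :
    ∑ j ∈ Finset.range (n + 2), killedWalk (n + 1) j • V (j + 1) =
      ∑ j ∈ Finset.range (n + 1), killedWalk n j • (2⁻¹ : ℝ) • (V (j + 2) + V j) := by
  have hshift : ∑ j ∈ Finset.range (n + 1), killedWalk n (j + 2) • V (j + 2) + killedWalk n 1 • V 1
      = ∑ j ∈ Finset.range (n + 1), killedWalk n j • V j := by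
    have hext := Finset.sum_range_succ (fun j => killedWalk n j • V j) (n + 1)
    rw [eq_zero_of_lt n.lt_succ_self, zero_smul, add_zero] at hext
    rw [← hext, Finset.sum_range_succ, eq_zero_of_lt (by omega : n < n + 2), zero_smul, add_zero,
      Finset.sum_range_succ' _ (n + 1), hV, smul_zero, add_zero, Finset.sum_range_succ']
  calc ∑ j ∈ Finset.range (n + 2), killedWalk (n + 1) j • V (j + 1)
      = (2⁻¹ : ℝ) • (∑ j ∈ Finset.range (n + 1), killedWalk n j • V (j + 2) +
          (∑ j ∈ Finset.range (n + 1), killedWalk n (j + 2) • V (j + 2) +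
            killedWalk n 1 • V 1)) := by
        rw [Finset.sum_range_succ', ← add_assoc, ← Finset.sum_add_distrib, smul_add,
          Finset.smul_sum]
        simp only [killedWalk, div_eq_inv_mul, mul_smul, add_smul, zero_add, add_assoc,
          Nat.reduceAdd]
    _ = _ := by
        rw [hshift, ← Finset.sum_add_distrib, Finset.smul_sum]
        simp only [← smul_add, smul_comm (2⁻¹ : ℝ)]

lemma pow_apply_eq_sum {M : Type*} [AddCommGroup M] [Module ℝ M] {P : Module.End ℝ M}
    {V : ℕ → M} (hV : V 0 = 0) (hP : ∀ j, P (V (j + 1)) = (2⁻¹ : ℝ) • (V (j + 2) + V j)) (n : ℕ) :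
    (P ^ n) (V 1) = ∑ j ∈ Finset.range (n + 1), killedWalk n j • V (j + 1) := by
  induction n with
  | zero => simp [killedWalk]
  | succ n ih =>
    rw [pow_succ', Module.End.mul_apply, ih, map_sum, sum_succ hV]
    simp only [map_smul, hP]

-- `j + 1` is harmonic for the killed walk.
lemma sum_mul_succ (n : ℕ) :
    ∑ j ∈ Finset.range (n + 1), killedWalk n j * ((j : ℝ) + 1) = 1 := by
  induction n with
  | zero => simp [killedWalk]
  | succ n ih =>
    have hstep := sum_succ (V := fun j => (j : ℝ)) Nat.cast_zero n
    simp only [smul_eq_mul] at hstep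
    push_cast at hstep
    rw [hstep, ← ih]
    exact Finset.sum_congr rfl fun j _ => by ring

lemma sum_mul_succ_cube (n : ℕ) :
    ∑ j ∈ Finset.range (n + 1), killedWalk n j * ((j : ℝ) + 1) ^ 3 = 3 * (n : ℝ) + 1 := by
  induction n with
  | zero => simp [killedWalk]
  | succ n ih =>
    have hstep := sum_succ (V := fun j => (j : ℝ) ^ 3) (by simp) n
    simp only [smul_eq_mul] at hstep
    push_cast at hstep ⊢
    rw [hstep]
    calc ∑ j ∈ Finset.range (n + 1), killedWalk n j * (2⁻¹ * (((j : ℝ) + 2) ^ 3 + (j : ℝ) ^ 3))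
        = ∑ j ∈ Finset.range (n + 1), killedWalk n j * ((j : ℝ) + 1) ^ 3
          + 3 * ∑ j ∈ Finset.range (n + 1), killedWalk n j * ((j : ℝ) + 1) := by
          rw [Finset.mul_sum, ← Finset.sum_add_distrib]
          exact Finset.sum_congr rfl fun j _ => by ring
      _ = 3 * ((n : ℝ) + 1) + 1 := by rw [ih, sum_mul_succ]; ring

lemma one_div_le_sq_sum (n : ℕ) :
    1 / (3 * n + 1 : ℝ) ≤ (∑ j ∈ Finset.range (n + 1), killedWalk n j) ^ 2 := by
  set M := ∑ j ∈ Finset.range (n + 1), killedWalk n j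
  have hM : 0 ≤ M := Finset.sum_nonneg fun j _ => nonneg n j
  -- Hölder with exponent `3`, between the masses of orders `0`, `1` and `3`.
  have hHolder := Real.inner_le_weight_mul_Lp_of_nonneg (Finset.range (n + 1)) (p := 3)
    (by norm_num) (killedWalk n) (fun j => (j : ℝ) + 1) (nonneg n) fun j => by positivity
  have hpow : M ^ (1 - (3 : ℝ)⁻¹) = (M ^ 2) ^ (3 : ℝ)⁻¹ := by
    rw [← Real.rpow_natCast, ← Real.rpow_mul hM]
    norm_num
  simp only [Real.rpow_ofNat, sum_mul_succ, sum_mul_succ_cube] at hHolder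
  rw [hpow, ← Real.mul_rpow (by positivity) (by positivity)] at hHolder
  rw [div_le_iff₀ (by positivity)]
  by_contra! hlt
  exact hHolder.not_gt (Real.rpow_lt_one (by positivity) hlt (by norm_num))

lemma sum_range_le_two (j N : ℕ) : ∑ n ∈ Finset.range N, killedWalk n j ≤ 2 := by
  induction N generalizing j with
  | zero => simp
  | succ N ih =>
    rw [Finset.sum_range_succ']
    cases j with
    | zero =>
      simp only [killedWalk, ← Finset.sum_div]
      linarith [ih 1]
    | succ j =>
      simp only [killedWalk, ← Finset.sum_div, Finset.sum_add_distrib]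
      linarith [ih j, ih (j + 2)]

/-- The kernel at `(0, j)` of `(1 - A) ^ (-1/2)`, where `A` is the transition operator of the
killed walk. -/
noncomputable def invSqrtKernel (j : ℕ) : ℝ := ∑' n, invSqrtCoeff n * killedWalk n j

lemma summable_invSqrtCoeff_mul (j : ℕ) : Summable fun n => invSqrtCoeff n * killedWalk n j :=
  (summable_of_sum_range_le (fun n => nonneg n j) (sum_range_le_two j)).of_nonneg_of_le
    (fun n => mul_nonneg (invSqrtCoeff_nonneg n) (nonneg n j))
    fun n => mul_le_of_le_one_left (nonneg n j) (invSqrtCoeff_le_one n)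

lemma one_div_le_invSqrtCoeff_mul_sum (n : ℕ) :
    1 / (4 * (n + 1) : ℝ) ≤ invSqrtCoeff n * ∑ j ∈ Finset.range (n + 1), killedWalk n j := by
  refine le_of_sq_le_sq ?_
    (mul_nonneg (invSqrtCoeff_nonneg n) (Finset.sum_nonneg fun j _ => nonneg n j))
  calc (1 / (4 * (n + 1) : ℝ)) ^ 2 ≤ 1 / (4 * n + 1) * (1 / (3 * n + 1)) := by
        rw [div_mul_div_comm, div_pow, div_le_div_iff₀ (by positivity) (by positivity)]
        nlinarith [n.cast_nonneg (α := ℝ)]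
    _ ≤ _ := by
        rw [mul_pow]
        exact mul_le_mul (one_div_le_invSqrtCoeff_sq n) (one_div_le_sq_sum n) (by positivity)
          (sq_nonneg _)

lemma tsum_ofReal_invSqrtKernel : ∑' j, ENNReal.ofReal (invSqrtKernel j) = ∞ := by
  have hterm (n j : ℕ) : 0 ≤ invSqrtCoeff n * killedWalk n j :=
    mul_nonneg (invSqrtCoeff_nonneg n) (nonneg n j)
  have hharmonic : ∑' n : ℕ, ENNReal.ofReal (1 / (4 * (n + 1) : ℝ)) = ∞ := by
    by_contra hfin
    have hpos (n : ℕ) : 0 ≤ 1 / (4 * (n + 1) : ℝ) := by positivity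
    have hsum : Summable fun n : ℕ => (4 : ℝ)⁻¹ * ((n + 1 : ℕ) : ℝ)⁻¹ :=
      (ENNReal.summable_toReal hfin).congr fun n => by
        rw [ENNReal.toReal_ofReal (hpos n), one_div, mul_inv, Nat.cast_succ]
    rw [summable_mul_left_iff (by norm_num)] at hsum
    exact Real.not_summable_natCast_inv ((summable_nat_add_iff 1).1 hsum)
  refine top_le_iff.1 ?_
  calc ∞ = ∑' n : ℕ, ENNReal.ofReal (1 / (4 * (n + 1) : ℝ)) := hharmonic.symm
    _ ≤ ∑' n, ∑' j, ENNReal.ofReal (invSqrtCoeff n * killedWalk n j) := by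
        refine ENNReal.tsum_le_tsum fun n => ?_
        refine le_trans ?_ (ENNReal.sum_le_tsum (Finset.range (n + 1)))
        rw [← ENNReal.ofReal_sum_of_nonneg fun j _ => hterm n j, ← Finset.mul_sum]
        exact ENNReal.ofReal_le_ofReal (one_div_le_invSqrtCoeff_mul_sum n)
    _ = ∑' j, ENNReal.ofReal (invSqrtKernel j) := by
        rw [ENNReal.tsum_comm]
        simp only [invSqrtKernel,
          fun j => ENNReal.ofReal_tsum_of_nonneg (hterm · j) (summable_invSqrtCoeff_mul j)]

end killedWalk

-- This is `e^{-t(1 - a)} = e^{-t} e^{ta}`, read through `φ`.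
lemma tsum_neg_pow_mul_one_sub_pow {R : Type*} [Ring R] [Algebra ℝ R] (φ : R →ₗ[ℝ] ℝ) (a : R)
    (t : ℝ) (h : Summable fun n : ℕ => t ^ n / n.factorial * φ (a ^ n)) :
    ∑' n : ℕ, (-t) ^ n / n.factorial * φ ((1 - a) ^ n) =
      Real.exp (-t) * ∑' n : ℕ, t ^ n / n.factorial * φ (a ^ n) := by
  rw [Real.exp_eq_exp_ℝ, NormedSpace.exp_eq_tsum_div,
    tsum_mul_tsum_eq_tsum_sum_antidiagonal_of_summable_norm
      (Real.summable_pow_div_factorial (-t)).norm h.norm]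
  refine tsum_congr fun n => ?_
  have hbinom : (-t) ^ n • (1 - a) ^ n =
      ∑ kl ∈ Finset.HasAntidiagonal.antidiagonal n,
        n.choose kl.1 • ((-t) ^ kl.1 * t ^ kl.2) • a ^ kl.2 := by
    have hcomm : Commute ((-t) • (1 : R)) (t • a) := (Commute.one_left _).smul_left _
    rw [← smul_pow, smul_sub, neg_smul t a, sub_neg_eq_add, hcomm.add_pow']
    simp only [smul_pow, one_pow, smul_mul_smul_comm, one_mul]
  have hφ := congrArg φ hbinom
  simp only [map_smul, map_sum, map_nsmul, smul_eq_mul] at hφ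
  rw [div_mul_eq_mul_div, hφ, Finset.sum_div]
  refine Finset.sum_congr rfl fun ⟨k, l⟩ hkl => ?_
  obtain rfl : k + l = n := Finset.HasAntidiagonal.mem_antidiagonal.1 hkl
  have hchoose : ((k + l).choose k : ℝ) * k.factorial * l.factorial = (k + l).factorial := by
    rw [Nat.choose_symm_add]
    exact_mod_cast Nat.add_choose_mul_factorial_mul_factorial k l
  rw [nsmul_eq_mul, ← hchoose]
  have : ((k + l).choose k : ℝ) ≠ 0 := mod_cast (Nat.choose_pos (Nat.le_add_right k l)).ne'
  field_simp

lemma hasSum_invSqrtCoeff_mul {u : ℕ → ℝ} (hu : Summable fun n => invSqrtCoeff n * u n) :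
    HasSum (fun n => invSqrtCoeff n * u n) ((√Real.pi)⁻¹ * ∫ t in Ioi (0 : ℝ),
      Real.exp (-t) * (∑' n : ℕ, t ^ n / n.factorial * u n) * t ^ (-(1 : ℝ) / 2)) := by
  have hpi : √Real.pi ≠ 0 := (Real.sqrt_pos.2 Real.pi_pos).ne'
  let F (n : ℕ) (t : ℝ) : ℝ := u n / n.factorial * (Real.exp (-t) * t ^ ((n + 1 / 2 : ℝ) - 1))
  have hint (n : ℕ) : Integrable (F n) (volume.restrict (Ioi 0)) :=
    (Real.GammaIntegral_convergent (by positivity)).const_mul _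
  have hval (v : ℝ) (n : ℕ) : ∫ t in Ioi (0 : ℝ), v / n.factorial *
      (Real.exp (-t) * t ^ ((n + 1 / 2 : ℝ) - 1)) = √Real.pi * (invSqrtCoeff n * v) := by
    rw [integral_const_mul, ← Real.Gamma_eq_integral (by positivity), Gamma_natCast_add_half]
    field_simp
  have hnorm (n : ℕ) : ∫ t in Ioi (0 : ℝ), ‖F n t‖ = √Real.pi * |invSqrtCoeff n * u n| := by
    rw [abs_mul, abs_of_nonneg (invSqrtCoeff_nonneg n), ← hval]
    refine setIntegral_congr_fun measurableSet_Ioi fun t ht => ?_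
    have hpow : 0 ≤ t ^ ((n + 1 / 2 : ℝ) - 1) := Real.rpow_nonneg (le_of_lt ht) _
    simp only [F, norm_mul, norm_div, Real.norm_eq_abs, Nat.abs_cast, Real.abs_exp,
      abs_of_nonneg hpow]
  have hsum := hasSum_integral_of_summable_integral_norm hint
    (by simpa only [hnorm] using hu.abs.mul_left (√Real.pi))
  have hseries : ∀ t ∈ Ioi (0 : ℝ), ∑' n, F n t =
      Real.exp (-t) * (∑' n : ℕ, t ^ n / n.factorial * u n) * t ^ (-(1 : ℝ) / 2) := by
    intro t ht
    rw [← tsum_mul_left, ← tsum_mul_right]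
    refine tsum_congr fun n => ?_
    have hpow : t ^ ((n + 1 / 2 : ℝ) - 1) = t ^ n * t ^ (-(1 : ℝ) / 2) := by
      rw [← Real.rpow_natCast, ← Real.rpow_add ht]
      ring_nf
    simp only [F, hpow]
    ring
  rw [setIntegral_congr_fun measurableSet_Ioi hseries] at hsum
  simpa only [F, hval, inv_mul_cancel_left₀ hpi] using hsum.mul_left (√Real.pi)⁻¹

lemma end_pow_apply_nonneg {R M : Type*} [Semiring R] [AddCommMonoid M] [Module R M] [Preorder M]
    {P : Module.End R M} (hP : ∀ f, 0 ≤ f → 0 ≤ P f) {u : M} (hu : 0 ≤ u) (n : ℕ) :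
    0 ≤ (P ^ n) u := by
  rw [Module.End.pow_apply]
  exact Function.Iterate.rec (0 ≤ ·) hu hP n

lemma sum_pow_apply_sub_le {R M : Type*} [Ring R] [AddCommGroup M] [Module R M] [PartialOrder M]
    [IsOrderedAddMonoid M] {P : Module.End R M} (hP : ∀ f, 0 ≤ f → 0 ≤ P f) {u : M} (hu : 0 ≤ u)
    (N : ℕ) : ∑ n ∈ Finset.range N, (P ^ n) (u - P u) ≤ u := by
  have htele : ∑ n ∈ Finset.range N, (P ^ n) (u - P u) = u - (P ^ N) u := by
    simpa using LinearMap.congr_fun (geom_sum_mul_neg P N) u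
  rw [htele]
  exact sub_le_self u (end_pow_apply_nonneg hP hu N)

namespace FlowTree

variable {q : ℕ} (S : FlowTree q)

/-- The finite set of successors of a vertex. -/
noncomputable def children (x : S.V) : Finset S.V := (S.succ_finite x).toFinset

@[simp]
lemma mem_children {x y : S.V} : y ∈ S.children x ↔ S.pred y = x := by
  simp [children]

lemma card_children (x : S.V) : (S.children x).card = q :=
  (Nat.card_eq_card_finite_toFinset (S.succ_finite x)).symm.trans (S.succ_card x)

lemma tsum_successors {E : Type*} [AddCommMonoid E] [TopologicalSpace E] [T2Space E]
    (f : S.V → E) (x : S.V) : ∑' y : {y | S.pred y = x}, f y.1 = ∑ y ∈ S.children x, f y := by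
  have hset : (S.children x : Set S.V) = {y | S.pred y = x} := Set.ext fun y => by simp
  rw [← hset]
  exact Finset.tsum_subtype' (S.children x) f

variable {S} in
lemma branching_pos (x : S.V) : 0 < q := by
  rw [← S.card_children (S.pred x), Finset.card_pos]
  exact ⟨x, by simp⟩

variable {S} in
lemma branching_ne_zero (x : S.V) : (q : ℝ) ≠ 0 := mod_cast (branching_pos x).ne'

lemma level_iterate_pred (n : ℕ) (x : S.V) : S.level (S.pred^[n] x) = S.level x + n := by
  induction n with
  | zero => simp
  | succ n ih => rw [iterate_succ_apply', S.level_pred, ih, Nat.cast_succ, add_assoc]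

variable {S} in
lemma level_pred_inj {x y : S.V} : S.level (S.pred x) = S.level (S.pred y) ↔
    S.level x = S.level y := by
  rw [S.level_pred, S.level_pred, _root_.add_left_inj]

variable {S} in
lemma eq_of_iterate_pred_eq {m n : ℕ} {x : S.V} (h : S.pred^[m] x = S.pred^[n] x) : m = n := by
  have hlevel := congrArg S.level h
  rw [level_iterate_pred, level_iterate_pred] at hlevel
  omega

lemma le'_iff_exists_iterate {x z : S.V} : S.le' x z ↔ ∃ n, S.pred^[n] x = z := by
  constructor
  · intro h
    obtain ⟨n, m, hnm, hd⟩ := S.dist_spec x z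
    have hlevel := congrArg S.level hnm
    rw [level_iterate_pred, level_iterate_pred] at hlevel
    rw [le', S.dist_comm] at h
    obtain rfl : m = 0 := by omega
    exact ⟨n, hnm⟩
  · rintro ⟨n, rfl⟩
    have hle := S.dist_le x (S.pred^[n] x) n 0 rfl
    obtain ⟨k, m, hkm, hd⟩ := S.dist_spec x (S.pred^[n] x)
    have hlevel := congrArg S.level hkm
    simp only [level_iterate_pred] at hlevel
    rw [le', S.dist_comm, level_iterate_pred]
    omega

lemma wR_pos (x : S.V) : 0 < S.wR x := zpow_pos (mod_cast branching_pos x) _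

/-- The transition operator `P = (Σ + Σ*) / 2`, acting on vector-valued functions, so that it
applies both to the real heat kernel and to complex functions on the tree. -/
noncomputable def walkOp (E : Type*) [AddCommGroup E] [Module ℝ E] :
    Module.End ℝ (S.V → E) where
  toFun f x := (2⁻¹ : ℝ) • (f (S.pred x) + (q : ℝ)⁻¹ • ∑ c ∈ S.children x, f c)
  map_add' f g := by
    ext x
    simp only [Pi.add_apply, Finset.sum_add_distrib, smul_add]
    abel
  map_smul' r f := by
    ext x
    simp only [Pi.smul_apply, ← Finset.smul_sum, smul_comm _ r, ← smul_add, RingHom.id_apply]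

section walkOp

variable {E E' : Type*} [AddCommGroup E] [Module ℝ E] [AddCommGroup E'] [Module ℝ E']

lemma walkOp_apply (f : S.V → E) (x : S.V) : S.walkOp E f x =
    (2⁻¹ : ℝ) • (f (S.pred x) + (q : ℝ)⁻¹ • ∑ c ∈ S.children x, f c) := rfl

lemma walkOp_pow_comp (φ : E →ₗ[ℝ] E') (n : ℕ) (f : S.V → E) :
    (S.walkOp E' ^ n) (φ ∘ f) = φ ∘ (S.walkOp E ^ n) f := by
  induction n with
  | zero => rfl
  | succ n ih =>
    rw [pow_succ', pow_succ', Module.End.mul_apply, Module.End.mul_apply, ih]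
    ext x
    simp only [walkOp_apply, comp_apply, map_smul, map_add, map_sum]

lemma walkOp_comp_pred (f : S.V → E) :
    S.walkOp E (f ∘ S.pred) = (2⁻¹ : ℝ) • (f ∘ S.pred ∘ S.pred + f) := by
  ext x
  have hchild : ∑ c ∈ S.children x, f (S.pred c) = (q : ℝ) • f x := by
    rw [Finset.sum_congr rfl fun c hc => congrArg f (S.mem_children.1 hc), Finset.sum_const,
      card_children, Nat.cast_smul_eq_nsmul]
  simp only [walkOp_apply, comp_apply, hchild, inv_smul_smul₀ (branching_ne_zero x), Pi.smul_apply,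
    Pi.add_apply]

lemma walkOp_nonneg (f : S.V → ℝ) (hf : 0 ≤ f) : 0 ≤ S.walkOp ℝ f := fun x =>
  smul_nonneg (by positivity) (add_nonneg (hf _)
    (smul_nonneg (by positivity) (Finset.sum_nonneg fun c _ => hf c)))

lemma lapR_iterate (n : ℕ) (f : S.V → ℝ) : S.lapR^[n] f = ((1 - S.walkOp ℝ) ^ n) f := by
  have hlap : S.lapR = ⇑(1 - S.walkOp ℝ) := by
    funext f x
    rw [lapR, sigStarR, tsum_successors, LinearMap.sub_apply, Pi.sub_apply, walkOp_apply,
      Module.End.one_apply, smul_eq_mul, smul_eq_mul, inv_mul_eq_div 2]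
  rw [hlap, ← Module.End.pow_apply]

end walkOp

/-- The kernel of `P ^ n` with respect to the flow measure. -/
noncomputable def walkKer (n : ℕ) (x y : S.V) : ℝ := (S.walkOp ℝ ^ n) (S.deltaMu y) x

lemma deltaMu_nonneg (y : S.V) : 0 ≤ S.deltaMu y := fun x => by
  have := S.wR_pos y
  rw [deltaMu]
  split_ifs <;> positivity

lemma walkKer_nonneg (n : ℕ) (x y : S.V) : 0 ≤ S.walkKer n x y :=
  end_pow_apply_nonneg S.walkOp_nonneg (S.deltaMu_nonneg y) n x

lemma wR_pred (x : S.V) : S.wR (S.pred x) = q * S.wR x := by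
  rw [wR, wR, S.level_pred, zpow_add_one₀ (branching_ne_zero x), mul_comm]

lemma wR_iterate_pred (n : ℕ) (x : S.V) : S.wR (S.pred^[n] x) = q ^ n * S.wR x := by
  induction n with
  | zero => simp
  | succ n ih => rw [iterate_succ_apply', wR_pred, ih, pow_succ', mul_assoc]

/-- The function `μ(z)⁻¹ 1_{x ≤ z}`, the normalized indicator of the cone of descendants of `z`. -/
noncomputable def coneDensity (z x : S.V) : ℝ := if S.le' x z then (S.wR z)⁻¹ else 0

lemma coneDensity_nonneg (z : S.V) : 0 ≤ S.coneDensity z := fun x => by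
  have := S.wR_pos z
  rw [coneDensity]
  split_ifs <;> positivity

lemma coneDensity_eq_deltaMu_add (z x : S.V) :
    S.coneDensity z x = S.deltaMu z x + S.coneDensity z (S.pred x) := by
  by_cases hxz : x = z
  · have hself : S.le' x z := S.le'_iff_exists_iterate.2 ⟨0, hxz⟩
    have hpred : ¬ S.le' (S.pred x) z := fun h => by
      obtain ⟨n, hn⟩ := S.le'_iff_exists_iterate.1 h
      exact n.succ_ne_zero (eq_of_iterate_pred_eq (n := 0) (hn.trans hxz.symm))
    rw [coneDensity, coneDensity, deltaMu, if_pos hself, if_neg hpred, if_pos hxz, add_zero]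
  · have hiff : S.le' x z ↔ S.le' (S.pred x) z := by
      simp only [le'_iff_exists_iterate, ← iterate_succ_apply]
      refine ⟨fun ⟨n, hn⟩ => ?_, fun ⟨n, hn⟩ => ⟨n + 1, hn⟩⟩
      cases n with
      | zero => exact absurd hn hxz
      | succ n => exact ⟨n, hn⟩
    simp only [coneDensity, deltaMu, hiff, if_neg hxz, zero_add]

lemma sum_children_deltaMu (z x : S.V) :
    ∑ c ∈ S.children x, S.deltaMu z c = q * S.deltaMu (S.pred z) x := by
  have hq := branching_ne_zero x
  simp only [deltaMu, Finset.sum_ite_eq', mem_children, wR_pred, eq_comm (a := x)]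
  split_ifs
  · field_simp
  · simp

lemma coneDensity_sub_walkOp (z : S.V) : S.coneDensity z - S.walkOp ℝ (S.coneDensity z) =
    (2⁻¹ : ℝ) • (S.deltaMu z - S.deltaMu (S.pred z)) := by
  ext x
  have hchild : ∑ c ∈ S.children x, S.coneDensity z c =
      q * (S.deltaMu (S.pred z) x + S.coneDensity z x) := by
    have hterm : ∀ c ∈ S.children x, S.coneDensity z c = S.deltaMu z c + S.coneDensity z x :=
      fun c hc => by rw [coneDensity_eq_deltaMu_add, S.mem_children.1 hc]
    rw [Finset.sum_congr rfl hterm, Finset.sum_add_distrib, sum_children_deltaMu, Finset.sum_const,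
      card_children, nsmul_eq_mul, mul_add]
  simp only [Pi.sub_apply, Pi.smul_apply, walkOp_apply, hchild, smul_eq_mul,
    inv_mul_cancel_left₀ (branching_ne_zero x)]
  linear_combination (2⁻¹ : ℝ) * S.coneDensity_eq_deltaMu_add z x

lemma summable_coneDensity_iterate (hq : 2 ≤ q) (y : S.V) :
    Summable fun n => S.coneDensity (S.pred^[n] y) := by
  refine Pi.summable.2 fun x => ?_
  have hgeom : Summable fun n : ℕ => ((q : ℝ)⁻¹) ^ n * (S.wR y)⁻¹ :=
    (summable_geometric_of_lt_one (by positivity)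
      (inv_lt_one_of_one_lt₀ (mod_cast hq))).mul_right _
  refine hgeom.of_nonneg_of_le (fun n => S.coneDensity_nonneg _ x) fun n => ?_
  rw [inv_pow, ← mul_inv, ← wR_iterate_pred, coneDensity]
  split_ifs
  · exact le_rfl
  · exact (inv_pos.2 (S.wR_pos _)).le

/-- The Green function `G(·, y) = 2 ∑ₙ μ(𝔭ⁿ(y))⁻¹ 1_{· ≤ 𝔭ⁿ(y)}` of the walk. -/
noncomputable def green (y : S.V) : S.V → ℝ := (2 : ℝ) • ∑' n, S.coneDensity (S.pred^[n] y)

lemma green_nonneg (y : S.V) : 0 ≤ S.green y :=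
  smul_nonneg zero_le_two (tsum_nonneg fun _ => S.coneDensity_nonneg _)

lemma continuous_walkOp : Continuous (S.walkOp ℝ) :=
  continuous_pi fun x => by simp only [walkOp_apply]; fun_prop

-- The potentials of the cones above `y` telescope.
lemma green_sub_walkOp (hq : 2 ≤ q) (y : S.V) :
    S.green y - S.walkOp ℝ (S.green y) = S.deltaMu y := by
  have hcone := S.summable_coneDensity_iterate hq y
  obtain ⟨D, hD⟩ : Summable fun n => S.deltaMu (S.pred^[n] y) :=
    Pi.summable.2 fun x => (Pi.summable.1 hcone x).of_nonneg_of_le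
      (fun n => S.deltaMu_nonneg _ x) fun n => by
        rw [coneDensity_eq_deltaMu_add]
        exact le_add_of_nonneg_right (S.coneDensity_nonneg _ _)
  have htele := hD.sub ((hasSum_nat_add_iff' 1).2 hD)
  have hsum := (hcone.hasSum.sub (hcone.hasSum.map (S.walkOp ℝ) S.continuous_walkOp)).const_smul
    (2 : ℝ)
  simp only [comp_apply, coneDensity_sub_walkOp, smul_inv_smul₀ (two_ne_zero' ℝ)] at hsum
  simp only [iterate_succ_apply', Finset.sum_range_one, iterate_zero_apply,
    _root_.sub_sub_cancel] at htele
  rw [green, map_smul, ← smul_sub]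
  exact hsum.unique htele

lemma summable_walkKer (hq : 2 ≤ q) (x y : S.V) : Summable fun n => S.walkKer n x y := by
  refine summable_of_sum_range_le (S.walkKer_nonneg · x y) (c := S.green y x) fun N => ?_
  have hle := sum_pow_apply_sub_le S.walkOp_nonneg (S.green_nonneg y) N x
  rwa [green_sub_walkOp S hq, Finset.sum_apply] at hle

lemma Hker_eq (hq : 2 ≤ q) (t : ℝ) (x y : S.V) :
    S.Hker t x y = Real.exp (-t) * ∑' n : ℕ, t ^ n / n.factorial * S.walkKer n x y := by
  let φ : Module.End ℝ (S.V → ℝ) →ₗ[ℝ] ℝ := LinearMap.proj x ∘ₗ LinearMap.applyₗ (S.deltaMu y)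
  have hsum : Summable fun n : ℕ => t ^ n / n.factorial * φ (S.walkOp ℝ ^ n) :=
    (Real.summable_pow_div_factorial t).norm.mul_tendsto_const
      (S.summable_walkKer hq x y).tendsto_cofinite_zero
  simp only [Hker, lapR_iterate]
  exact tsum_neg_pow_mul_one_sub_pow φ (S.walkOp ℝ) t hsum

lemma hasSum_Kker (hq : 2 ≤ q) (x y : S.V) :
    HasSum (fun n => invSqrtCoeff n * S.walkKer n x y) (S.Kker x y) := by
  have hsum : Summable fun n => invSqrtCoeff n * S.walkKer n x y :=
    (S.summable_walkKer hq x y).of_nonneg_of_le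
      (fun n => mul_nonneg (invSqrtCoeff_nonneg n) (S.walkKer_nonneg n x y))
      fun n => mul_le_of_le_one_left (S.walkKer_nonneg n x y) (invSqrtCoeff_le_one n)
  simpa only [Kker, Hker_eq S hq] using hasSum_invSqrtCoeff_mul hsum

/-- Functions annihilated by `Σ*`, such as those in the range of `∇_ε*`. -/
def IsHorizontal {E : Type*} [AddCommMonoid E] (g : S.V → E) : Prop :=
  ∀ x, ∑ c ∈ S.children x, g c = 0

section module

variable {E : Type*} [AddCommGroup E] [Module ℝ E] {g : S.V → E}

lemma sum_walkKer_smul {s : Finset S.V} (hs : support g ⊆ s) (n : ℕ) (x : S.V) :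
    ∑ y ∈ s, S.walkKer n x y • S.wR y • g y = (S.walkOp E ^ n) g x := by
  have hg : g = ∑ y ∈ s, LinearMap.toSpanSingleton ℝ E (S.wR y • g y) ∘ S.deltaMu y := by
    ext x
    have hterm (y : S.V) : S.deltaMu y x • S.wR y • g y = if x = y then g y else 0 := by
      rw [deltaMu]
      split_ifs
      · exact inv_smul_smul₀ (S.wR_pos y).ne' _
      · exact zero_smul _ _
    simp only [Finset.sum_apply, comp_apply, LinearMap.toSpanSingleton_apply, hterm,
      Finset.sum_ite_eq]
    split_ifs with hx
    · rfl
    · exact notMem_support.1 fun h => hx (hs h)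
  conv_rhs => rw [hg, map_sum, Finset.sum_apply]
  simp only [walkOp_pow_comp, comp_apply, LinearMap.toSpanSingleton_apply, walkKer]

variable {S} in
lemma IsHorizontal.walkOp_eq (hg : S.IsHorizontal g) :
    S.walkOp E g = (2⁻¹ : ℝ) • (g ∘ S.pred) := by
  ext x
  rw [walkOp_apply, hg x, smul_zero, add_zero, Pi.smul_apply, comp_apply]

variable {S} in
lemma IsHorizontal.walkOp_pow_apply (hg : S.IsHorizontal g) (n : ℕ) (x : S.V) :
    (S.walkOp E ^ n) g x = ∑ j ∈ Finset.range (n + 1), killedWalk n j • g (S.pred^[j] x) := by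
  let V (j : ℕ) : S.V → E := j.casesOn 0 fun i => g ∘ S.pred^[i]
  have hV (j : ℕ) : S.walkOp E (V (j + 1)) = (2⁻¹ : ℝ) • (V (j + 2) + V j) := by
    cases j with
    | zero => exact hg.walkOp_eq.trans (congrArg _ (add_zero _).symm)
    | succ j => exact S.walkOp_comp_pred (g ∘ S.pred^[j])
  have hpow := congrFun (killedWalk.pow_apply_eq_sum (V := V) rfl hV n) x
  rwa [Finset.sum_apply] at hpow

end module

section normed

variable {E : Type*} [NormedAddCommGroup E] [NormedSpace ℝ E] {g : S.V → E}

/-- The operator `𝓛^{-1/2}` on finitely supported functions. -/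
noncomputable def invSqrtLap (g : S.V → E) (x : S.V) : E := ∑' y, S.Kker x y • S.wR y • g y

lemma hasSum_invSqrtLap (hq : 2 ≤ q) (hg : (support g).Finite) (x : S.V) :
    HasSum (fun n => invSqrtCoeff n • (S.walkOp E ^ n) g x) (S.invSqrtLap g x) := by
  have hs : support g ⊆ hg.toFinset := hg.coe_toFinset.ge
  rw [invSqrtLap, tsum_eq_sum (s := hg.toFinset) fun y hy => by
    rw [notMem_support.1 fun h => hy (hs h), smul_zero, smul_zero]]
  refine (hasSum_sum fun y _ => (S.hasSum_Kker hq x y).smul_const (S.wR y • g y)).congr_fun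
    fun n => ?_
  simp only [← S.sum_walkKer_smul hs, Finset.smul_sum, smul_smul, mul_assoc]

variable {S} in
lemma IsHorizontal.invSqrtLap_apply (hg : S.IsHorizontal g) (hq : 2 ≤ q) (hfin : (support g).Finite)
    {L : ℤ} (hL : ∀ y ∈ support g, S.level y = L) {N : ℕ} {x : S.V}
    (hx : S.pred^[N] x ∈ support g) :
    S.invSqrtLap g x = killedWalk.invSqrtKernel N • g (S.pred^[N] x) := by
  have hpow (n : ℕ) : (S.walkOp E ^ n) g x = killedWalk n N • g (S.pred^[N] x) := by
    rw [hg.walkOp_pow_apply]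
    refine Finset.sum_eq_single N (fun j _ hj => ?_) fun hN => ?_
    · have hoff : S.pred^[j] x ∉ support g := fun h => hj <| by
        have hlevel := (hL _ h).trans (hL _ hx).symm
        rw [level_iterate_pred, level_iterate_pred] at hlevel
        omega
      rw [notMem_support.1 hoff, smul_zero]
    · rw [killedWalk.eq_zero_of_lt (by simpa using hN), zero_smul]
  have hsum := S.hasSum_invSqrtLap hq hfin x
  simp only [hpow, smul_smul] at hsum
  exact hsum.unique ((killedWalk.summable_invSqrtCoeff_mul N).hasSum.smul_const _)

end normed

lemma w_eq_ofReal (x : S.V) : S.w x = ENNReal.ofReal (S.wR x) := by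
  rw [w, wR, ← Real.rpow_intCast, ← ENNReal.ofReal_rpow_of_pos (mod_cast branching_pos x),
    ENNReal.ofReal_natCast]

lemma w_ne_zero (x : S.V) : S.w x ≠ 0 := by
  simpa only [w_eq_ofReal, Ne, ENNReal.ofReal_eq_zero, not_le] using S.wR_pos x

lemma sum_children_w (x : S.V) : ∑ c ∈ S.children x, S.w c = S.w x := by
  have hq : (q : ℝ≥0∞) ≠ 0 := mod_cast (branching_pos x).ne'
  have hchild : ∀ c ∈ S.children x, S.w c = S.w x / q := fun c hc => by
    rw [ENNReal.eq_div_iff hq (natCast_ne_top q), ← S.mem_children.1 hc, w_eq_ofReal, w_eq_ofReal,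
      wR_pred, ENNReal.ofReal_mul q.cast_nonneg, ENNReal.ofReal_natCast]
  rw [Finset.sum_congr rfl hchild, Finset.sum_const, card_children, nsmul_eq_mul,
    ENNReal.mul_div_cancel hq (natCast_ne_top q)]

lemma tsum_comp_pred (F : S.V → ℝ≥0∞) : ∑' x, F (S.pred x) * S.w x = ∑' x, F x * S.w x := by
  rw [← (Equiv.sigmaFiberEquiv S.pred).tsum_eq, ENNReal.tsum_sigma']
  refine tsum_congr fun z => ?_
  calc ∑' c : {c // S.pred c = z}, F (S.pred c) * S.w c
      = ∑' c : {c // S.pred c = z}, F z * S.w c := tsum_congr fun c => by rw [c.2]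
    _ = F z * S.w z := by
        rw [ENNReal.tsum_mul_left]
        exact congrArg _ ((S.tsum_successors S.w z).trans (S.sum_children_w z))

lemma tsum_comp_pred_iterate (F : S.V → ℝ≥0∞) (N : ℕ) :
    ∑' x, F (S.pred^[N] x) * S.w x = ∑' x, F x * S.w x := by
  induction N with
  | zero => rfl
  | succ N ih => exact (S.tsum_comp_pred fun x => F (S.pred^[N] x)).trans ih

-- Every generation below `z` has the same mass as `z`.
lemma tsum_eq_top_of_descendants {f : S.V → ℝ≥0∞} {z : S.V} {C : ℕ → ℝ≥0∞}
    (hC : ∑' N, C N = ∞) (hf : ∀ N x, S.pred^[N] x = z → C N ≤ f x) :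
    ∑' x, f x * S.w x = ∞ := by
  have hgeneration (N : ℕ) :
      ∑' x, (if S.pred^[N] x = z then C N else 0) * S.w x = C N * S.w z := by
    rw [S.tsum_comp_pred_iterate (fun x => if x = z then C N else 0) N,
      tsum_eq_single z fun x hx => by rw [if_neg hx, zero_mul], if_pos rfl]
  have hle (x : S.V) : ∑' N, (if S.pred^[N] x = z then C N else 0) ≤ f x := by
    by_cases hx : ∃ N, S.pred^[N] x = z
    · obtain ⟨N, hN⟩ := hx
      rw [tsum_eq_single N fun M hM => if_neg fun h => hM (eq_of_iterate_pred_eq (h.trans hN.symm)),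
        if_pos hN]
      exact hf N x hN
    · simp only [not_exists.1 hx, if_false, tsum_zero, zero_le]
  refine top_le_iff.1 ?_
  calc ∞ = ∑' N, C N * S.w z := by
        rw [ENNReal.tsum_mul_right, hC, ENNReal.top_mul (S.w_ne_zero z)]
    _ = ∑' x, (∑' N, if S.pred^[N] x = z then C N else 0) * S.w x := by
        simp only [← hgeneration, ← ENNReal.tsum_mul_right]
        exact ENNReal.tsum_comm
    _ ≤ ∑' x, f x * S.w x := ENNReal.tsum_le_tsum fun x => mul_le_mul_left (hle x) _

variable {S} in
lemma IsHorizontal.tsum_enorm_invSqrtLap {E : Type*} [NormedAddCommGroup E] [NormedSpace ℝ E]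
    {g : S.V → E} (hg : S.IsHorizontal g) (hq : 2 ≤ q) (hfin : (support g).Finite) {L : ℤ}
    (hL : ∀ y ∈ support g, S.level y = L) (hne : (support g).Nonempty) :
    ∑' x, ‖S.invSqrtLap g x‖ₑ * S.w x = ∞ := by
  obtain ⟨z, hz⟩ := hne
  refine S.tsum_eq_top_of_descendants (z := z)
    (C := fun N => ENNReal.ofReal (killedWalk.invSqrtKernel N) * ‖g z‖ₑ) ?_ ?_
  · rw [ENNReal.tsum_mul_right, killedWalk.tsum_ofReal_invSqrtKernel,
      ENNReal.top_mul (enorm_ne_zero.2 hz)]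
  · rintro N x rfl
    rw [hg.invSqrtLap_apply hq hfin hL hz, enorm_smul]
    exact mul_le_mul_left (Real.ofReal_le_enorm _) _

lemma isAdmissibleTrapezoid_children (x : S.V) :
    S.IsAdmissibleTrapezoid (S.children x : Set S.V) := by
  refine Or.inr ⟨x, 1, 2, one_pos, le_rfl, by norm_num, Set.ext fun y => ?_⟩
  simp only [Finset.mem_coe, mem_children, mem_ofPred_eq, le'_iff_exists_iterate]
  constructor
  · rintro rfl
    refine ⟨⟨1, rfl⟩, ?_, ?_⟩ <;> rw [S.level_pred] <;> push_cast <;> omega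
  · rintro ⟨⟨n, rfl⟩, hlt, hle⟩
    rw [level_iterate_pred] at hlt hle
    obtain rfl : n = 1 := by omega
    rfl

lemma muS_children (x : S.V) : S.muS (S.children x : Set S.V) = S.w x :=
  (Finset.tsum_subtype' (S.children x) S.w).trans (S.sum_children_w x)

/-- The difference of the unit masses at `p` and `p'`, normalized to be a `(1,∞)`-atom on the set
of successors of `𝔭(p)` when `p'` is a sibling of `p`. -/
noncomputable def siblingAtom (p p' : S.V) : S.V → ℂ :=
  (S.wR (S.pred p))⁻¹ • (Pi.single p 1 - Pi.single p' 1)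

variable {S} {p p' : S.V}

lemma support_siblingAtom_subset : support (S.siblingAtom p p') ⊆ {p, p'} := fun x hx => by
  contrapose! hx
  simp only [mem_insert_iff, mem_singleton_iff, not_or] at hx
  simp [siblingAtom, hx.1, hx.2]

lemma siblingAtom_self (hne : p' ≠ p) : S.siblingAtom p p' p = ((S.wR (S.pred p))⁻¹ : ℝ) := by
  simp [siblingAtom, hne.symm]

lemma siblingAtom_sibling (hne : p' ≠ p) :
    S.siblingAtom p p' p' = -((S.wR (S.pred p))⁻¹ : ℝ) := by
  simp [siblingAtom, hne]

lemma isOneInftyAtom_siblingAtom (hp : S.pred p' = S.pred p) (hne : p' ≠ p) :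
    S.IsOneInftyAtom (S.siblingAtom p p') := by
  refine ⟨_, S.isAdmissibleTrapezoid_children (S.pred p), fun x hx => ?_, ?_, fun x => ?_⟩
  · rw [Finset.mem_coe, mem_children]
    rcases support_siblingAtom_subset hx with rfl | rfl
    exacts [rfl, hp]
  · have hsupp (x : S.V) (hx : x ∉ ({p, p'} : Finset S.V)) :
        S.siblingAtom p p' x * (S.wR x : ℂ) = 0 := by
      have hx' : x ∉ support (S.siblingAtom p p') :=
        fun h => hx (by simpa using support_siblingAtom_subset h)
      rw [notMem_support.1 hx', zero_mul]
    have hwR : S.wR p' = S.wR p := by rw [wR, wR, level_pred_inj.1 (congrArg S.level hp)]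
    rw [tsum_eq_sum hsupp, Finset.sum_pair hne.symm, siblingAtom_self hne, siblingAtom_sibling hne,
      hwR, neg_mul, add_neg_cancel]
  · have hw := S.wR_pos (S.pred p)
    rw [muS_children, w_eq_ofReal, ← ENNReal.ofReal_inv_of_pos hw, ← enorm_eq_nnnorm, ← ofReal_norm]
    refine ENNReal.ofReal_le_ofReal ?_
    by_cases hx : x ∈ support (S.siblingAtom p p')
    · rcases support_siblingAtom_subset hx with rfl | rfl
      · rw [siblingAtom_self hne, Complex.norm_real, Real.norm_of_nonneg (inv_pos.2 hw).le]
      · rw [siblingAtom_sibling hne, norm_neg, Complex.norm_real,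
          Real.norm_of_nonneg (inv_pos.2 hw).le]
    · rw [notMem_support.1 hx, norm_zero]
      exact (inv_pos.2 hw).le

lemma IsHorizontal.hgradStar {ε : S.V → ℂ} (hε : S.IsHorizontal ε) (f : S.V → ℂ) :
    S.IsHorizontal (S.hgradStar ε f) := fun x => by
  have hchild : ∀ c ∈ S.children x, S.hgradStar ε f c = starRingEnd ℂ (ε c) * f x :=
    fun c hc => by rw [FlowTree.hgradStar, S.mem_children.1 hc]
  rw [Finset.sum_congr rfl hchild, ← Finset.sum_mul, ← map_sum, hε x, map_zero, zero_mul]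

lemma support_hgradStar_subset (ε f : S.V → ℂ) :
    support (S.hgradStar ε f) ⊆ S.pred ⁻¹' support f := fun _ hx => right_ne_zero_of_mul hx

end FlowTree

open FlowTree in
theorem hRieszStar_not_H1_L1_general {q : ℕ} (hq : 2 ≤ q) (S : FlowTree q) (eps : S.V → ℂ)
    (hz : ∀ x : S.V, ∑' y : {y | S.pred y = x}, eps y.1 = 0) (hne : ∃ x, eps x ≠ 0) :
    ∃ a : S.V → ℂ, S.IsOneInftyAtom a ∧
      ∑' x, (‖∑' y, (S.Kker x y : ℂ) * S.hgradStar eps a y * (S.wR y : ℂ)‖₊ : ℝ≥0∞)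
        * S.w x = ∞ := by
  obtain ⟨z, hεz⟩ := hne
  obtain ⟨p', hp'mem, hpp'⟩ : ∃ p' ∈ S.children (S.pred (S.pred z)), p' ≠ S.pred z :=
    Finset.exists_mem_ne (by rwa [S.card_children]) _
  have hp' : S.pred p' = S.pred (S.pred z) := S.mem_children.1 hp'mem
  refine ⟨_, isOneInftyAtom_siblingAtom hp' hpp', ?_⟩
  set g := S.hgradStar eps (S.siblingAtom (S.pred z) p')
  have hhor : S.IsHorizontal g :=
    IsHorizontal.hgradStar (fun x => (S.tsum_successors eps x).symm.trans (hz x)) _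
  have hsupp : support g ⊆ S.pred ⁻¹' {S.pred z, p'} :=
    (support_hgradStar_subset _ _).trans (preimage_mono support_siblingAtom_subset)
  have hfin : (support g).Finite :=
    ((toFinite {S.pred z, p'}).preimage' fun x _ => S.succ_finite x).subset hsupp
  have hlevel : ∀ y ∈ support g, S.level y = S.level z := fun y hy => level_pred_inj.1 <| by
    rcases hsupp hy with h | h
    · rw [h]
    · rw [h, level_pred_inj.1 (congrArg S.level hp')]
  have hgz : z ∈ support g := mul_ne_zero ((map_ne_zero _).2 hεz) <| by
    simpa [siblingAtom_self hpp'] using (S.wR_pos _).ne'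
  have htop := hhor.tsum_enorm_invSqrtLap hq hfin hlevel ⟨z, hgz⟩
  simpa only [invSqrtLap, Complex.real_smul, mul_assoc, mul_comm (g _), enorm_eq_nnnorm] using htop

/-- if `ε` is not identically zero, there is a `(1,∞)`-atom `a` with
`Σ_x |𝓡_ε* a(x)| μ(x) = +∞`; in particular `𝓡_ε*` does not map `H¹(μ)` into `L¹(μ)`. -/
theorem hRieszStar_not_H1_L1 {q : ℕ} (hq : 2 ≤ q) (S : FlowTree q)
    (eps : S.V → ℂ) (hb : ∃ M : ℝ, ∀ x, ‖eps x‖ ≤ M)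
    (hz : ∀ x : S.V, ∑' y : {y | S.pred y = x}, eps y.1 = 0)
    (hne : ∃ x, eps x ≠ 0) :
    ∃ a : S.V → ℂ, S.IsOneInftyAtom a ∧
      ∑' x, (‖∑' y, (S.Kker x y : ℂ) * S.hgradStar eps a y * (S.wR y : ℂ)‖₊ : ℝ≥0∞)
        * S.w x = ∞ :=
  hRieszStar_not_H1_L1_general hq S eps hz hne
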